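/- (Vanishing of off-the-ground-chaos compositions, d ≥ 3.) Let d ≥ 3, κ ∈ {1,2}, a ≥ 1 and σ ∈ {+1,−1}^a, and define heights p₀ := 1 and p_s := 1 + Σ_{r=1}^s σ_r; assume p_s ≥ 1 for all s and m := p_a ≥ 2. For each s with σ_s = +1 choose indices 1 ≤ i_s < i'_s ≤ p_s + κ − 1, and for each s with σ_s = −1 choose an index 1 ≤ q_s ≤ p_s + κ − 1. Fix j₁ ∈ ℤ^d₀ (and j₂ ∈ ℤ^d₀ if κ = 2), and let E ∈ L²_κ be E(k) := 1{k = j₁} if κ = 1 and E(k₁,k₂) := (1{(k₁,k₂)=(j₁,j₂)} + 1{(k₁,k₂)=(j₂,j₁)})/2 if κ = 2. Set Ψ_ε := T^{ε,σ_a}[g_a] ∘ ⋯ ∘ T^{ε,σ₁}[g₁] E ∈ L²_{m+κ−1}, where T^{ε,+1}[g_s] := T^{ε,+}[(i_s,i'_s)] and T^{ε,−1}[g_s] := T^{ε,−}[q_s]. Then, along the sequence ε → 0 with 1/ε ∈ ℕ + 1/2, the limit lim_{ε→0} ‖(−L₀)^{−1/2} Ψ_ε‖_{L²_{m+κ−1}}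 = 0 holds. -/

import Mathlib

open scoped BigOperators
open scoped Classical

noncomputable section

namespace SBE

/-- Lattice points of `ℤ^d`. -/
abbrev ZLat (d : ℕ) := Fin d → ℤ

/-- Kernels of the `n`-th chaos: functions on `n`-tuples of lattice points. -/
abbrev Chaos (d n : ℕ) := (Fin n → ZLat d) → ℂ

/-- Squared Euclidean norm of a lattice point. -/
def nsq {d : ℕ} (k : ZLat d) : ℝ := ∑ i, ((k i : ℝ))^2

/-- Euclidean norm of a lattice point. -/
def eN {d : ℕ} (k : ZLat d) : ℝ := Real.sqrt (nsq k)

/-- Supremum norm of a lattice point. -/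
def sN {d : ℕ} (k : ZLat d) : ℝ := ((Finset.univ.sup fun i => (k i).natAbs : ℕ) : ℝ)

/-- The norm used in the Fourier cutoff: Euclidean if `d = 2`, supremum otherwise. -/
def cutNorm (d : ℕ) (k : ZLat d) : ℝ := if d = 2 then eN k else sN k

/-- `w · k`. -/
def dotw {d : ℕ} (w : Fin d → ℝ) (k : ZLat d) : ℝ := ∑ i, w i * (k i : ℝ)

/-- `|k_{1:n}|² = Σ_i |k_i|²`. -/
def wSq {d n : ℕ} (k : Fin n → ZLat d) : ℝ := ∑ a, nsq (k a)

/-- The coupling constant `λ_ε`. -/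
def lam (d : ℕ) (ε : ℝ) : ℝ :=
  if d = 2 then (Real.sqrt (Real.log (1 / ε^2)))⁻¹ else ε ^ ((d:ℝ)/2 - 1)

/-- The Fourier cutoff indicator `J^ε_{ℓ,m}`. -/
def Jind (d : ℕ) (ε : ℝ) (l m : ZLat d) : ℝ :=
  if 0 < ε * cutNorm d l ∧ ε * cutNorm d l ≤ 1 ∧
     0 < ε * cutNorm d m ∧ ε * cutNorm d m ≤ 1 ∧
     0 < ε * cutNorm d (l + m) ∧ ε * cutNorm d (l + m) ≤ 1 then 1 else 0

/-- Symmetry of a kernel under permutation of its arguments. -/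
def Symm {d n : ℕ} (f : Chaos d n) : Prop :=
  ∀ (σ : Equiv.Perm (Fin n)) (k : Fin n → ZLat d), f (k ∘ σ) = f k

/-- A kernel vanishes whenever one of its arguments is the zero frequency
(i.e. it is really a function on `(ℤ^d_0)^n`). -/
def SuppOk {d n : ℕ} (f : Chaos d n) : Prop :=
  ∀ k : Fin n → ZLat d, (∃ a, k a = 0) → f k = 0

/-- Summand of `‖(-L₀)^s f‖²`. -/
def sobTerm {d n : ℕ} (s : ℝ) (f : Chaos d n) (k : Fin n → ZLat d) : ℝ :=
  (wSq k / 2) ^ (2*s) * ‖f k‖^2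

/-- `‖(-L₀)^s f‖² = n! Σ_k (|k_{1:n}|²/2)^{2s} |f(k)|²`. -/
def sobSq {d n : ℕ} (s : ℝ) (f : Chaos d n) : ℝ := (n.factorial : ℝ) * ∑' k, sobTerm s f k

/-- Remove the entries `i < j` from an `(n+2)`-tuple (order preservingly). -/
def remove2 {X : Type*} {n : ℕ} (k : Fin (n+2) → X) (i j : Fin (n+2)) (h : i < j) :
    Fin n → X :=
  fun a => k (j.succAbove ((Fin.castLT i
    (Nat.lt_of_lt_of_le (Fin.lt_def.mp h) (Nat.lt_succ_iff.mp j.isLt))).succAbove a))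

/-- The operator `A⁺_ε : ΓL²_{n+1} → ΓL²_{n+2}`. -/
def Aplus (d : ℕ) (w : Fin d → ℝ) (ε : ℝ) {n : ℕ} (f : Chaos d (n+1)) : Chaos d (n+2) :=
  fun k => -(2 * Complex.I / (((2*Real.pi) ^ ((d:ℝ)/2) : ℝ) : ℂ)) *
      ((lam d ε / ((n:ℝ)+2) : ℝ) : ℂ) *
    ∑ i : Fin (n+2), ∑ j : Fin (n+2),
      if h : i < j then
        ((dotw w (k i + k j) : ℝ) : ℂ) * ((Jind d ε (k i) (k j) : ℝ) : ℂ) *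
          f (Fin.cons (k i + k j) (remove2 k i j h))
      else 0

/-- The operator `A⁻_ε : ΓL²_{n+2} → ΓL²_{n+1}`. -/
def Aminus (d : ℕ) (w : Fin d → ℝ) (ε : ℝ) {n : ℕ} (f : Chaos d (n+2)) : Chaos d (n+1) :=
  fun k => (2 * Complex.I / (((2*Real.pi) ^ ((d:ℝ)/2) : ℝ) : ℂ)) *
      ((((n:ℝ)+2) * lam d ε : ℝ) : ℂ) *
    ∑ j : Fin (n+1), ((dotw w (k j) : ℝ) : ℂ) *
      ∑' l : ZLat d, ((Jind d ε l (k j - l) : ℝ) : ℂ) *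
        f (Fin.cons l (Fin.cons (k j - l) (fun a => k (j.succAbove a))))

/-- `L²` norm squared (no factorial): `Σ_k |f(k)|²`. -/
def l2Sq {d n : ℕ} (f : Chaos d n) : ℝ := ∑' k, ‖f k‖^2

/-- Diagonal operator `(−L₀)^s`, multiplying the kernel at `k` by `(|k_{1:n}|²/2)^s`. -/
def negPow {d n : ℕ} (s : ℝ) (f : Chaos d n) : Chaos d n :=
  fun k => (((wSq k / 2) ^ s : ℝ) : ℂ) * f k

/-- The labelled creation operator `A⁺_ε[(i,j)] : L²_{n+1} → L²_{n+2}`. -/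
def AplusL (d : ℕ) (w : Fin d → ℝ) (ε : ℝ) {n : ℕ} (i j : Fin (n+2)) (h : i < j)
    (f : Chaos d (n+1)) : Chaos d (n+2) :=
  fun k => -((2 * Complex.I * ((ε ^ ((d:ℝ)/2 - 1) : ℝ) : ℂ)) /
        (((2*Real.pi) ^ ((d:ℝ)/2) : ℝ) : ℂ)) *
      ((dotw w (k i + k j) : ℝ) : ℂ) * ((Jind d ε (k i) (k j) : ℝ) : ℂ) *
      f (Fin.cons (k i + k j) (remove2 k i j h))

/-- The labelled annihilation operator `A⁻_ε[q] : L²_{n+2} → L²_{n+1}`. -/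
def AminusL (d : ℕ) (w : Fin d → ℝ) (ε : ℝ) {n : ℕ} (q : Fin (n+1))
    (f : Chaos d (n+2)) : Chaos d (n+1) :=
  fun k => ((2 * Complex.I * ((ε ^ ((d:ℝ)/2 - 1) : ℝ) : ℂ)) /
        (((2*Real.pi) ^ ((d:ℝ)/2) : ℝ) : ℂ)) *
      ((dotw w (k q) : ℝ) : ℂ) *
    ∑' l : ZLat d, ((Jind d ε l (k q - l) : ℝ) : ℂ) *
      f (Fin.cons l (Fin.cons (k q - l) (fun a => k (q.succAbove a))))

/-- `T^{ε,+}[(i,j)] = (−L₀)^{−1/2} A⁺_ε[(i,j)] (−L₀)^{−1/2}`. -/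
def TplusL (d : ℕ) (w : Fin d → ℝ) (ε : ℝ) {n : ℕ} (i j : Fin (n+2)) (h : i < j)
    (f : Chaos d (n+1)) : Chaos d (n+2) :=
  negPow (-(1/2)) (AplusL d w ε i j h (negPow (-(1/2)) f))

/-- `T^{ε,−}[q] = (−L₀)^{−1/2} A⁻_ε[q] (−L₀)^{−1/2}`. -/
def TminusL (d : ℕ) (w : Fin d → ℝ) (ε : ℝ) {n : ℕ} (q : Fin (n+1))
    (f : Chaos d (n+2)) : Chaos d (n+1) :=
  negPow (-(1/2)) (AminusL d w ε q (negPow (-(1/2)) f))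

/-- A single step of a chaos path: either a creation step `T^{ε,+}[(i,j)]`
(raising the chaos level from `n+1` to `n+2`) or an annihilation step `T^{ε,−}[q]`
(lowering it from `n+2` to `n+1`).  The typing automatically keeps all levels `≥ 1`. -/
inductive PMove : ℕ → ℕ → Type where
  | plus  : (n : ℕ) → (i j : Fin (n+2)) → i < j → PMove (n+1) (n+2)
  | minus : (n : ℕ) → (q : Fin (n+1)) → PMove (n+2) (n+1)

/-- A path of creation/annihilation steps from chaos level `a` to chaos level `b`. -/
inductive PPath : ℕ → ℕ → Type where
  | nil : (n : ℕ) → PPath n n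
  | cons : {a b c : ℕ} → PMove a b → PPath b c → PPath a c

/-- Action of a single step. -/
def PMove.app (d : ℕ) (w : Fin d → ℝ) (ε : ℝ) :
    {a b : ℕ} → PMove a b → Chaos d a → Chaos d b
  | _, _, PMove.plus _ i j h, f => TplusL d w ε i j h f
  | _, _, PMove.minus _ q, f => TminusL d w ε q f

/-- Action of a path: the composition `T^{ε,σ_a}[g_a] ∘ ⋯ ∘ T^{ε,σ₁}[g₁]`. -/
def PPath.app (d : ℕ) (w : Fin d → ℝ) (ε : ℝ) :
    {a b : ℕ} → PPath a b → Chaos d a → Chaos d b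
  | _, _, PPath.nil _, f => f
  | _, _, PPath.cons mv p, f => PPath.app d w ε p (PMove.app d w ε mv f)

/-- All chaos levels visited by the path are `≥ m`. -/
def PPath.levelsGE (m : ℕ) : {a b : ℕ} → PPath a b → Prop
  | a, _, PPath.nil _ => m ≤ a
  | a, _, PPath.cons _ p => m ≤ a ∧ PPath.levelsGE m p

/-- Number of steps of the path. -/
def PPath.length : {a b : ℕ} → PPath a b → ℕ
  | _, _, PPath.nil _ => 0
  | _, _, PPath.cons _ p => PPath.length p + 1

/-- The (symmetrised) elementary kernel `E ∈ L²_κ` built from the frequencies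
`j : Fin κ → ℤ^d`; for `κ = 1` it is `1_{k = j₁}` and for `κ = 2` it is
`(1_{(k₁,k₂)=(j₁,j₂)} + 1_{(k₁,k₂)=(j₂,j₁)})/2`. -/
def Ebase (d κ : ℕ) (j : Fin κ → ZLat d) : Chaos d κ :=
  fun k => (((κ.factorial : ℝ))⁻¹ : ℂ) *
    ∑ σ : Equiv.Perm (Fin κ), if k = j ∘ σ then 1 else 0

theorem nsq_nonneg {d : ℕ} (k : ZLat d) : 0 ≤ nsq k := by
  unfold nsq; positivity

theorem sq_le_nsq {d : ℕ} (k : ZLat d) (c : Fin d) : ((k c : ℝ))^2 ≤ nsq k := by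
  unfold nsq
  exact Finset.single_le_sum (f := fun c => ((k c : ℝ))^2) (fun _ _ => sq_nonneg _) (Finset.mem_univ c)

theorem one_le_nsq {d : ℕ} {k : ZLat d} (hk : k ≠ 0) : 1 ≤ nsq k := by
  obtain ⟨c, hc⟩ := Function.ne_iff.mp hk
  refine le_trans ?_ (sq_le_nsq k c)
  have : (1:ℤ) ≤ (k c)^2 := by
    have h2 : 0 < (k c)^2 := sq_pos_of_ne_zero hc
    omega
  exact_mod_cast this

theorem nsq_le_wSq {d n : ℕ} (k : Fin n → ZLat d) (a : Fin n) : nsq (k a) ≤ wSq k := by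
  unfold wSq
  exact Finset.single_le_sum (f := fun a => nsq (k a)) (fun _ _ => nsq_nonneg _) (Finset.mem_univ a)

theorem wSq_nonneg {d n : ℕ} (k : Fin n → ZLat d) : 0 ≤ wSq k :=
  Finset.sum_nonneg fun _ _ => nsq_nonneg _

theorem dotw_sq_le {d : ℕ} (w : Fin d → ℝ) (k : ZLat d) :
    (dotw w k)^2 ≤ (∑ i, (w i)^2) * nsq k := by
  unfold dotw nsq
  exact Finset.sum_mul_sq_le_sq_mul_sq _ _ _

/-- cutoff condition -/
def cond {d : ℕ} (N : ℕ) (l : ZLat d) : Prop := l ≠ 0 ∧ ∀ c, |l c| ≤ (N : ℤ)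

def epsN (N : ℕ) : ℝ := ((N:ℝ) + 1/2)⁻¹

def gN (d N : ℕ) : ℝ := ((epsN N) ^ ((d:ℝ)/2 - 1))^2

def GK {d : ℕ} (N : ℕ) (l : ZLat d) : ℝ := gN d N * (if cond N l then (nsq l)⁻¹ else 0)

theorem epsN_pos (N : ℕ) : 0 < epsN N := by unfold epsN; positivity

theorem gN_nonneg (d N : ℕ) : 0 ≤ gN d N := by unfold gN; positivity

theorem gN_eq (d N : ℕ) (hd : 3 ≤ d) : gN d N = (((N:ℝ) + 1/2)^(d-2))⁻¹ := by
  unfold gN epsN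
  have h : (0:ℝ) ≤ ((N:ℝ) + 1/2)⁻¹ := by positivity
  rw [← Real.rpow_natCast, ← Real.rpow_mul h, ← inv_pow, ← Real.rpow_natCast]
  congr 1
  push_cast [Nat.cast_sub (show 2 ≤ d by omega)]
  ring

theorem gN_tendsto (d : ℕ) (hd : 3 ≤ d) : Filter.Tendsto (gN d) Filter.atTop (nhds 0) := by
  have : gN d = fun N : ℕ => (((N:ℝ) + 1/2)^(d-2))⁻¹ := funext fun N => gN_eq d N hd
  rw [this]
  apply Filter.Tendsto.inv_tendsto_atTop
  apply (Filter.tendsto_pow_atTop (by omega)).comp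
  exact Filter.tendsto_atTop_add_const_right _ _ tendsto_natCast_atTop_atTop

theorem GK_nonneg {d : ℕ} (N : ℕ) (l : ZLat d) : 0 ≤ GK N l := by
  unfold GK
  have := gN_nonneg d N
  have := nsq_nonneg l
  split_ifs <;> positivity

theorem GK_le {d : ℕ} (N : ℕ) (l : ZLat d) : GK N l ≤ gN d N := by
  unfold GK
  have := gN_nonneg d N
  split_ifs with h
  · have := one_le_nsq h.1
    exact mul_le_of_le_one_right ‹_› (inv_le_one_of_one_le₀ this)
  · simpa

theorem Jind_nonneg (d : ℕ) (ε : ℝ) (l m : ZLat d) : 0 ≤ Jind d ε l m := by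
  unfold Jind; split_ifs <;> norm_num

theorem Jind_le (d : ℕ) (hd : 3 ≤ d) (N : ℕ) (l m : ZLat d) :
    Jind d (epsN N) l m ^ 2 ≤ if cond N l then 1 else 0 := by
  unfold Jind
  split_ifs with h h2 h2
  · norm_num
  · exfalso
    apply h2
    obtain ⟨h0, h1, -⟩ := h
    have he := epsN_pos N
    have hd2 : d ≠ 2 := by omega
    simp only [cutNorm, hd2, if_false] at h0 h1
    have h0' := (mul_pos_iff_of_pos_left he).mp h0
    have h1' : sN l ≤ N + 1/2 := by
      unfold epsN at h1
      rwa [inv_mul_le_iff₀ (by positivity), mul_one] at h1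
    constructor
    · rintro rfl
      simp [sN] at h0'
    · intro c
      unfold sN at h1'
      have h3 : (l c).natAbs ≤ Finset.univ.sup fun i => (l i).natAbs :=
        Finset.le_sup (f := fun i => (l i).natAbs) (Finset.mem_univ c)
      have h4 : (Finset.univ.sup fun i => (l i).natAbs) < N + 1 := by
        have : ((Finset.univ.sup fun i => (l i).natAbs : ℕ) : ℝ) < ((N + 1 : ℕ) : ℝ) := by
          push_cast; linarith
        exact_mod_cast this
      rw [Int.abs_eq_natAbs]
      omega
  · norm_num
  · norm_num

theorem sum1d (s : ℝ) (hs0 : 0 ≤ s) (hs1 : s < 1) (n : ℕ) :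
    ∑ a ∈ Finset.range n, (1 + (a:ℝ))^(-s) ≤ (n:ℝ)^(1-s) / (1-s) := by
  have h1s : 0 < 1 - s := by linarith
  induction n with
  | zero => simp [Real.zero_rpow h1s.ne']
  | succ n ih =>
    rw [Finset.sum_range_succ]
    have hn : (0:ℝ) < n + 1 := by positivity
    have key := rpow_one_add_le_one_add_mul_self (s := -(1/((n:ℝ)+1))) (p := 1 - s)
      (by rw [neg_le_neg_iff, div_le_one hn]; linarith [(Nat.cast_nonneg n : (0:ℝ) ≤ n)]) h1s.le (by linarith)
    have e1 : 1 + -(1/((n:ℝ)+1)) = n / (n+1) := by field_simp; ring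
    rw [e1, Real.div_rpow (by positivity) hn.le, div_le_iff₀ (by positivity)] at key
    have e2 : ((n:ℝ)+1)^(1-s) = (n+1) * ((n:ℝ)+1)^(-s) := by
      rw [sub_eq_add_neg, Real.rpow_add hn, Real.rpow_one]
    have e3 : (1 + (1-s) * -(1/((n:ℝ)+1))) * ((n:ℝ)+1)^(1-s)
      = ((n:ℝ)+1)^(1-s) - (1-s) * ((n:ℝ)+1)^(-s) := by
      rw [e2]; field_simp; ring
    rw [e3] at key
    push_cast
    rw [le_div_iff₀ h1s] at ih ⊢
    rw [add_comm (1:ℝ) (n:ℝ)]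
    nlinarith

theorem sum1dZ (s : ℝ) (hs0 : 0 ≤ s) (hs1 : s < 1) (N : ℕ) :
    ∑ a ∈ Finset.Icc (-(N:ℤ)) N, (1 + |(a:ℝ)|)^(-s) ≤ 2 * (((N+1 : ℕ):ℝ)^(1-s) / (1-s)) := by
  have h := sum1d s hs0 hs1 (N+1)
  have hsub : Finset.Icc (-(N:ℤ)) N ⊆
      (Finset.range (N+1)).image (fun n : ℕ => (n:ℤ)) ∪ (Finset.range (N+1)).image (fun n : ℕ => -(n:ℤ)) := by
    intro a ha
    simp only [Finset.mem_Icc] at ha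
    simp only [Finset.mem_union, Finset.mem_image, Finset.mem_range]
    rcases le_total 0 a with h | h
    · left; exact ⟨a.natAbs, by omega, by omega⟩
    · right; exact ⟨a.natAbs, by omega, by omega⟩
  calc _ ≤ ∑ a ∈ (Finset.range (N+1)).image (fun n : ℕ => (n:ℤ)) ∪ (Finset.range (N+1)).image (fun n : ℕ => -(n:ℤ)), (1 + |(a:ℝ)|)^(-s) :=
        Finset.sum_le_sum_of_subset_of_nonneg hsub (fun _ _ _ => by positivity)
    _ ≤ ∑ a ∈ (Finset.range (N+1)).image (fun n : ℕ => (n:ℤ)), (1 + |(a:ℝ)|)^(-s) + ∑ a ∈ (Finset.range (N+1)).image (fun n : ℕ => -(n:ℤ)), (1 + |(a:ℝ)|)^(-s) := by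
        rw [← Finset.sum_union_inter]
        have : 0 ≤ ∑ a ∈ (Finset.range (N+1)).image (fun n : ℕ => (n:ℤ)) ∩ (Finset.range (N+1)).image (fun n : ℕ => -(n:ℤ)), (1 + |(a:ℝ)|)^(-s) := Finset.sum_nonneg fun _ _ => by positivity
        linarith
    _ = ∑ a ∈ Finset.range (N+1), (1 + (a:ℝ))^(-s) + ∑ a ∈ Finset.range (N+1), (1 + (a:ℝ))^(-s) := by
        rw [Finset.sum_image (by intro a _ b _ h; simpa using h), Finset.sum_image (by intro a _ b _ h; simpa using h)]
        simp
    _ ≤ _ := by linarith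

theorem nsq_inv_le {d : ℕ} (hd : 3 ≤ d) (l : ZLat d) (hl : l ≠ 0) :
    (nsq l)⁻¹ ≤ 4 * ∏ c, (1 + |(l c : ℝ)|)^(-(2/(d:ℝ))) := by
  have h1 := one_le_nsq hl
  have hd0 : (0:ℝ) < d := by positivity
  set r := Real.sqrt (nsq l) with hr
  have hr1 : 1 ≤ r := by rw [hr]; exact Real.one_le_sqrt.mpr h1
  have hr2 : r^2 = nsq l := Real.sq_sqrt (by linarith)
  have hc : ∀ c, (2*r)^(-(2/(d:ℝ))) ≤ (1 + |(l c : ℝ)|)^(-(2/(d:ℝ))) := by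
    intro c
    apply Real.rpow_le_rpow_of_nonpos (by positivity)
    · have : |(l c : ℝ)| ≤ r := Real.abs_le_sqrt (sq_le_nsq l c)
      linarith
    · have : 0 ≤ 2/(d:ℝ) := by positivity
      linarith
  have hp : ∏ c : Fin d, (2*r)^(-(2/(d:ℝ))) ≤ ∏ c, (1 + |(l c : ℝ)|)^(-(2/(d:ℝ))) :=
    Finset.prod_le_prod (fun _ _ => by positivity) (fun c _ => hc c)
  rw [Finset.prod_const, Finset.card_univ, Fintype.card_fin, ← Real.rpow_natCast, ← Real.rpow_mul (by positivity)] at hp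
  have e : -(2/(d:ℝ)) * d = -(2:ℕ) := by field_simp; norm_num
  rw [e, Real.rpow_neg (by positivity), Real.rpow_natCast, mul_pow, hr2] at hp
  have : (nsq l)⁻¹ = 4 * ((2:ℝ)^2 * nsq l)⁻¹ := by
    rw [mul_inv]; ring
  rw [this]; linarith

theorem sum_GK_real {d : ℕ} (hd : 3 ≤ d) : ∃ C : ℝ, ∀ N : ℕ,
    ∑ l ∈ Fintype.piFinset (fun _ : Fin d => Finset.Icc (-(N:ℤ)) N), GK N l ≤ C := by
  set s : ℝ := 2/(d:ℝ) with hs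
  have hd3 : (3:ℝ) ≤ d := by exact_mod_cast hd
  have hs0 : 0 ≤ s := by positivity
  have hs1 : s < 1 := by rw [hs, div_lt_one (by linarith)]; linarith
  refine ⟨4 * ((2/(1-s))^d * 2^(d-2)), fun N => ?_⟩
  have h1s : 0 < 1 - s := by linarith
  calc _ ≤ ∑ l ∈ Fintype.piFinset (fun _ : Fin d => Finset.Icc (-(N:ℤ)) N),
        gN d N * (4 * ∏ c, (1 + |(l c : ℝ)|)^(-s)) := by
        apply Finset.sum_le_sum
        intro l _
        unfold GK
        apply mul_le_mul_of_nonneg_left _ (gN_nonneg d N)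
        split_ifs with h
        · exact nsq_inv_le hd l h.1
        · positivity
    _ = gN d N * 4 * (∑ a ∈ Finset.Icc (-(N:ℤ)) N, (1 + |(a:ℝ)|)^(-s))^d := by
        have := Finset.prod_univ_sum (fun _ : Fin d => Finset.Icc (-(N:ℤ)) N) (fun _ a => (1 + |(a:ℝ)|)^(-s))
        rw [Finset.prod_const, Finset.card_univ, Fintype.card_fin] at this
        rw [this, Finset.mul_sum]
        simp only [mul_assoc]
    _ ≤ gN d N * 4 * (2 * (((N+1 : ℕ):ℝ)^(1-s) / (1-s)))^d := by
        have := gN_nonneg d N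
        have := sum1dZ s hs0 hs1 N
        gcongr
    _ = 4 * ((2/(1-s))^d * (gN d N * ((N:ℝ)+1)^(d-2))) := by
        have : (((N+1 : ℕ):ℝ)^(1-s))^d = ((N:ℝ)+1)^(d-2) := by
          rw [← Real.rpow_natCast, ← Real.rpow_mul (by positivity), ← Real.rpow_natCast]
          push_cast [Nat.cast_sub (show 2 ≤ d by omega)]
          congr 1
          rw [hs]; field_simp
        rw [show 2 * (((N+1 : ℕ):ℝ)^(1-s) / (1-s)) = (2/(1-s)) * ((N+1 : ℕ):ℝ)^(1-s) by ring, mul_pow, this]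
        ring
    _ ≤ _ := by
        have : gN d N * ((N:ℝ)+1)^(d-2) ≤ 2^(d-2) := by
          rw [gN_eq d N hd, inv_mul_le_iff₀ (by positivity), ← mul_pow]
          apply pow_le_pow_left₀ (by positivity)
          linarith [(Nat.cast_nonneg N : (0:ℝ) ≤ N)]
        gcongr

theorem sum_GK {d : ℕ} (hd : 3 ≤ d) : ∃ C : ENNReal, C ≠ ⊤ ∧ ∀ N : ℕ,
    ∑' l : ZLat d, ENNReal.ofReal (GK N l) ≤ C := by
  obtain ⟨C, hC⟩ := sum_GK_real hd
  refine ⟨ENNReal.ofReal C, ENNReal.ofReal_ne_top, fun N => ?_⟩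
  rw [tsum_eq_sum (s := Fintype.piFinset (fun _ : Fin d => Finset.Icc (-(N:ℤ)) N)),
    ← ENNReal.ofReal_sum_of_nonneg (fun _ _ => GK_nonneg _ _)]
  · exact ENNReal.ofReal_le_ofReal (hC N)
  · intro l hl
    unfold GK
    rw [if_neg]
    · simp
    · intro h
      apply hl
      simp only [Fintype.mem_piFinset, Finset.mem_Icc]
      intro c
      exact abs_le.mp (h.2 c)

theorem sum_GK_ball {d : ℕ} (N R : ℕ) (S : Set (ZLat d)) (z : ZLat d)
    (hS : ∀ l ∈ S, ∀ c, |l c - z c| ≤ (R:ℤ)) :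
    ∑' l : ZLat d, (if l ∈ S then ENNReal.ofReal (GK N l) else 0) ≤
      ((2*R+1)^d : ℕ) * ENNReal.ofReal (gN d N) := by
  rw [tsum_eq_sum (s := Fintype.piFinset (fun c : Fin d => Finset.Icc (z c - (R:ℤ)) (z c + R)))]
  · refine (Finset.sum_le_card_nsmul _ _ (ENNReal.ofReal (gN d N)) ?_).trans ?_
    · intro l _
      split_ifs
      · exact ENNReal.ofReal_le_ofReal (GK_le N l)
      · simp
    · rw [nsmul_eq_mul]
      gcongr
      rw [Fintype.card_piFinset]
      simp only [Int.card_Icc]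
      rw [Finset.prod_congr rfl (g := fun _ => 2*R+1) (fun c _ => by omega)]
      simp
  · intro l hl
    rw [if_neg]
    intro h
    apply hl
    simp only [Fintype.mem_piFinset, Finset.mem_Icc]
    intro c
    have := abs_le.mp (hS l h c)
    omega

theorem tsum_cs {α : Type*} (a b : α → ENNReal) :
    (∑' l, a l * b l)^2 ≤ (∑' l, (a l)^2) * ∑' l, (b l)^2 := by
  let _ : MeasurableSpace α := ⊤
  have h := ENNReal.lintegral_mul_le_Lp_mul_Lq (MeasureTheory.Measure.count (α := α))
    (p := 2) (q := 2) ⟨by norm_num, by norm_num, by norm_num⟩ (f := a) (g := b)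
    (measurable_from_top.aemeasurable) (measurable_from_top.aemeasurable)
  simp only [MeasureTheory.lintegral_count, Pi.mul_apply] at h
  calc _ ≤ ((∑' l, (a l)^(2:ℝ))^(1/2:ℝ) * (∑' l, (b l)^(2:ℝ))^(1/2:ℝ))^2 := by gcongr
    _ = _ := by
      rw [mul_pow, ← ENNReal.rpow_natCast, ← ENNReal.rpow_mul, ← ENNReal.rpow_natCast, ← ENNReal.rpow_mul]
      norm_num

theorem rpow_half_sq (x : ℝ) (hx : 0 ≤ x) : (x ^ (-(1/2) : ℝ))^2 = x⁻¹ := by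
  rw [← Real.rpow_natCast, ← Real.rpow_mul hx]
  norm_num [Real.rpow_neg_one]

theorem enorm_sq_eq (z : ℂ) : ‖z‖ₑ^2 = ENNReal.ofReal (‖z‖^2) := by
  rw [ENNReal.ofReal_pow (norm_nonneg _), ofReal_norm]

def CW (d : ℕ) (w : Fin d → ℝ) : ℝ := 16 * (∑ i, (w i)^2) / ((2*Real.pi) ^ ((d:ℝ)/2))^2

theorem CW_nonneg (d : ℕ) (w : Fin d → ℝ) : 0 ≤ CW d w := by unfold CW; positivity

theorem dotw_bd {d n : ℕ} (w : Fin d → ℝ) (k : Fin n → ZLat d) (a : Fin n) :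
    (dotw w (k a))^2 * (wSq k / 2)⁻¹ ≤ 2 * (∑ i, (w i)^2) := by
  have h1 := dotw_sq_le w (k a)
  have h2 := nsq_le_wSq k a
  have hW : 0 ≤ ∑ i, (w i)^2 := by positivity
  rcases (wSq_nonneg k).eq_or_lt with h | h
  · rw [← h]; simp; exact hW
  · rw [mul_inv_le_iff₀ (by positivity)]
    nlinarith [mul_le_mul_of_nonneg_left h2 hW]

theorem J_bd {d n : ℕ} (hd : 3 ≤ d) (N : ℕ) (k : Fin n → ZLat d) (a : Fin n) (m : ZLat d) :
    Jind d (epsN N) (k a) m ^ 2 * (wSq k / 2)⁻¹ ≤ 2 * (if cond N (k a) then (nsq (k a))⁻¹ else 0) := by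
  have h1 := Jind_le d hd N (k a) m
  have h0 : 0 ≤ (wSq k / 2)⁻¹ := by have := wSq_nonneg k; positivity
  refine (mul_le_mul_of_nonneg_right h1 h0).trans ?_
  split_ifs with h
  · have h2 := one_le_nsq h.1
    have h3 := nsq_le_wSq k a
    rw [one_mul, inv_div, div_eq_mul_inv]
    gcongr
  · simp

theorem plus_bd {d n : ℕ} (hd : 3 ≤ d) (w : Fin d → ℝ) (N : ℕ) (i j : Fin (n+2)) (h : i < j)
    (f : Chaos d (n+1)) (k : Fin (n+2) → ZLat d) :
    ‖TplusL d w (epsN N) i j h f k‖ₑ^2 ≤ ENNReal.ofReal (CW d w) *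
      (ENNReal.ofReal (GK N (k i)) * ‖f (Fin.cons (k i + k j) (remove2 k i j h))‖ₑ^2) := by
  rw [enorm_sq_eq, enorm_sq_eq, ← ENNReal.ofReal_mul (GK_nonneg _ _), ← ENNReal.ofReal_mul (CW_nonneg _ _)]
  apply ENNReal.ofReal_le_ofReal
  set x : Fin (n+1) → ZLat d := Fin.cons (k i + k j) (remove2 k i j h) with hx
  have hd1 := dotw_bd w x 0
  have hx0 : x 0 = k i + k j := rfl
  rw [hx0] at hd1
  have hJ := J_bd hd N k i (k j)
  have e : ‖TplusL d w (epsN N) i j h f k‖^2 =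
      ((dotw w (k i + k j))^2 * (wSq x / 2)⁻¹) * (Jind d (epsN N) (k i) (k j) ^ 2 * (wSq k / 2)⁻¹)
      * (4 * gN d N / ((2*Real.pi) ^ ((d:ℝ)/2))^2 * ‖f x‖^2) := by
    unfold TplusL AplusL negPow gN
    beta_reduce
    rw [← hx]
    simp only [norm_mul, norm_neg, norm_div, Complex.norm_real, Complex.norm_I, Complex.norm_ofNat,
      mul_pow, div_pow, Real.norm_eq_abs, sq_abs]
    rw [rpow_half_sq _ (by have := wSq_nonneg k; positivity), rpow_half_sq _ (by have := wSq_nonneg x; positivity)]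
    ring
  rw [e]
  have hg := gN_nonneg d N
  calc _ ≤ (2 * (∑ i, (w i)^2)) * (2 * (if cond N (k i) then (nsq (k i))⁻¹ else 0))
      * (4 * gN d N / ((2*Real.pi) ^ ((d:ℝ)/2))^2 * ‖f x‖^2) := by
        apply mul_le_mul_of_nonneg_right _ (by positivity)
        apply mul_le_mul hd1 hJ
        · have := wSq_nonneg k; positivity
        · positivity
    _ = _ := by unfold CW GK; ring

def xl {d n : ℕ} (q : Fin (n+1)) (y : Fin (n+1) → ZLat d) (l : ZLat d) : Fin (n+2) → ZLat d :=
  Fin.cons l (Fin.cons (y q - l) (fun a => y (q.succAbove a)))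

theorem minus_bd {d n : ℕ} (hd : 3 ≤ d) (w : Fin d → ℝ) (N : ℕ) (q : Fin (n+1))
    (f : Chaos d (n+2)) (y : Fin (n+1) → ZLat d) :
    ‖TminusL d w (epsN N) q f y‖ₑ^2 ≤ ENNReal.ofReal (CW d w) *
      (∑' l : ZLat d, ENNReal.ofReal (GK N l)) * ∑' l : ZLat d, ‖f (xl q y l)‖ₑ^2 := by
  set A : ℂ := (((wSq y / 2) ^ (-(1/2) : ℝ) : ℝ) : ℂ) * (((2 * Complex.I * ((epsN N ^ ((d:ℝ)/2 - 1) : ℝ) : ℂ)) /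
        (((2*Real.pi) ^ ((d:ℝ)/2) : ℝ) : ℂ)) * ((dotw w (y q) : ℝ) : ℂ)) with hA
  set a : ZLat d → ℂ := fun l => ((Jind d (epsN N) l (y q - l) : ℝ) : ℂ) * (((wSq (xl q y l) / 2) ^ (-(1/2) : ℝ) : ℝ) : ℂ) with ha
  have e : TminusL d w (epsN N) q f y = A * ∑' l, a l * f (xl q y l) := by
    unfold TminusL AminusL negPow
    rw [hA, ha, mul_assoc]
    simp only [mul_assoc]
    rfl
  have h1 : ‖TminusL d w (epsN N) q f y‖ₑ^2 ≤ ‖A‖ₑ^2 * ((∑' l, ‖a l‖ₑ^2) * ∑' l, ‖f (xl q y l)‖ₑ^2) := by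
    rw [e, enorm_mul, mul_pow]
    gcongr
    refine le_trans ?_ (tsum_cs _ _)
    gcongr
    refine enorm_tsum_le_tsum_enorm.trans ?_
    simp only [enorm_mul, le_refl]
  refine h1.trans ?_
  rw [← mul_assoc]
  refine mul_le_mul_left ?_ _
  rw [← ENNReal.tsum_mul_left, ← ENNReal.tsum_mul_left]
  refine ENNReal.tsum_le_tsum fun l => ?_
  rw [enorm_sq_eq, enorm_sq_eq, ← ENNReal.ofReal_mul (CW_nonneg _ _), ← ENNReal.ofReal_mul (by positivity)]
  apply ENNReal.ofReal_le_ofReal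
  have hd1 := dotw_bd w y q
  have hJ := J_bd hd N (xl q y l) 0 (y q - l)
  have hx0 : xl q y l 0 = l := rfl
  rw [hx0] at hJ
  have e : ‖A‖^2 * ‖a l‖^2 =
      ((dotw w (y q))^2 * (wSq y / 2)⁻¹) * (Jind d (epsN N) l (y q - l) ^ 2 * (wSq (xl q y l) / 2)⁻¹)
      * (4 * gN d N / ((2*Real.pi) ^ ((d:ℝ)/2))^2) := by
    rw [hA, ha]
    unfold gN
    simp only [norm_mul, norm_neg, norm_div, Complex.norm_real, Complex.norm_I, Complex.norm_ofNat,
      mul_pow, div_pow, Real.norm_eq_abs, sq_abs]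
    rw [rpow_half_sq _ (by have := wSq_nonneg y; positivity), rpow_half_sq _ (by have := wSq_nonneg (xl q y l); positivity)]
    ring
  rw [e]
  have hg := gN_nonneg d N
  calc _ ≤ (2 * (∑ i, (w i)^2)) * (2 * (if cond N l then (nsq l)⁻¹ else 0))
      * (4 * gN d N / ((2*Real.pi) ^ ((d:ℝ)/2))^2) := by
        apply mul_le_mul_of_nonneg_right _ (by positivity)
        apply mul_le_mul hd1 hJ
        · have := wSq_nonneg (xl q y l); positivity
        · positivity
    _ = _ := by unfold CW GK; ring

def small {d n : ℕ} (R : ℕ) (b : Fin n → Bool) (k : Fin n → ZLat d) : Prop :=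
  ∀ c, |∑ u, if b u then k u c else 0| ≤ (R:ℤ)

def mass {d n : ℕ} (f : Chaos d n) : ENNReal := ∑' k, ‖f k‖ₑ^2

def massS {d n : ℕ} (R : ℕ) (b : Fin n → Bool) (f : Chaos d n) : ENNReal :=
  ∑' k, if small R b k then ‖f k‖ₑ^2 else 0

def pred {n : ℕ} (i j : Fin (n+2)) (h : i < j) : Fin (n+1) := Fin.castLT i
    (Nat.lt_of_lt_of_le (Fin.lt_def.mp h) (Nat.lt_succ_iff.mp j.isLt))

theorem succAbove_pred {n : ℕ} (i j : Fin (n+2)) (h : i < j) : j.succAbove (pred i j h) = i := by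
  rw [Fin.succAbove_of_castSucc_lt]
  · rfl
  · exact h

theorem remove2_apply {X : Type*} {n : ℕ} (k : Fin (n+2) → X) (i j : Fin (n+2)) (h : i < j) (a : Fin n) :
    remove2 k i j h a = k (j.succAbove ((pred i j h).succAbove a)) := rfl

theorem cases2 {n : ℕ} (i j : Fin (n+2)) (h : i < j) (u : Fin (n+2)) :
    u = i ∨ u = j ∨ ∃ a, u = j.succAbove ((pred i j h).succAbove a) := by
  rcases Fin.eq_self_or_eq_succAbove j u with h1 | ⟨v, rfl⟩
  · exact Or.inr (Or.inl h1)
  · rcases Fin.eq_self_or_eq_succAbove (pred i j h) v with h1 | ⟨a, rfl⟩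
    · left; rw [h1, succAbove_pred]
    · exact Or.inr (Or.inr ⟨a, rfl⟩)

theorem sum2 {n : ℕ} (F : Fin (n+2) → ℤ) (i j : Fin (n+2)) (h : i < j) :
    ∑ u, F u = F i + F j + ∑ a, F (j.succAbove ((pred i j h).succAbove a)) := by
  rw [Fin.sum_univ_succAbove F j, Fin.sum_univ_succAbove _ (pred i j h), succAbove_pred]
  ring

def km {d n : ℕ} (i j : Fin (n+2)) (h : i < j) (k : Fin (n+2) → ZLat d) : Fin (n+1) → ZLat d :=
  Fin.cons (k i + k j) (remove2 k i j h)

theorem km_inj {d n : ℕ} (i j : Fin (n+2)) (h : i < j) :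
    Function.Injective (fun k : Fin (n+2) → ZLat d => (km i j h k, k i)) := by
  intro k k' hk
  simp only [Prod.mk.injEq] at hk
  obtain ⟨h1, h2⟩ := hk
  have h0 : k i + k j = k' i + k' j := congrFun h1 0
  have hs : ∀ a, k (j.succAbove ((pred i j h).succAbove a)) = k' (j.succAbove ((pred i j h).succAbove a)) :=
    fun a => congrFun h1 a.succ
  funext u
  rcases cases2 i j h u with rfl | rfl | ⟨a, rfl⟩
  · exact h2
  · rw [h2] at h0; exact add_left_cancel h0
  · exact hs a

theorem xl_inj {d n : ℕ} (q : Fin (n+1)) :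
    Function.Injective (fun p : (Fin (n+1) → ZLat d) × ZLat d => xl q p.1 p.2) := by
  rintro ⟨y, l⟩ ⟨y', l'⟩ h
  have h0 : l = l' := congrFun h 0
  have h1 : y q - l = y' q - l' := congrFun h 1
  have hs : ∀ a, y (q.succAbove a) = y' (q.succAbove a) := fun a => congrFun h a.succ.succ
  subst h0
  congr 1
  funext u
  rcases Fin.eq_self_or_eq_succAbove q u with rfl | ⟨a, rfl⟩
  · exact sub_left_injective h1
  · exact hs a

theorem plus_sum {d n : ℕ} (i j : Fin (n+2)) (h : i < j) (Θ : (Fin (n+1) → ZLat d) → ZLat d → ENNReal) :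
    ∑' k : Fin (n+2) → ZLat d, Θ (km i j h k) (k i) ≤ ∑' x, ∑' l, Θ x l := by
  rw [← ENNReal.tsum_prod]
  exact ENNReal.tsum_comp_le_tsum_of_injective (km_inj i j h) (fun p => Θ p.1 p.2)

theorem minus_sum {d n : ℕ} (q : Fin (n+1)) (φ : (Fin (n+2) → ZLat d) → ENNReal) :
    ∑' y : Fin (n+1) → ZLat d, ∑' l, φ (xl q y l) ≤ ∑' x, φ x := by
  rw [← ENNReal.tsum_prod]
  exact ENNReal.tsum_comp_le_tsum_of_injective (xl_inj q) φ

def bplus {n : ℕ} (i j : Fin (n+2)) (h : i < j) (b : Fin (n+2) → Bool) : Fin (n+1) → Bool :=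
  Fin.cons (b i) (remove2 b i j h)

def bminus {n : ℕ} (q : Fin (n+1)) (b : Fin (n+1) → Bool) : Fin (n+2) → Bool :=
  Fin.cons (b q) (Fin.cons (b q) (fun a => b (q.succAbove a)))

theorem small_plus {d n : ℕ} (R : ℕ) (i j : Fin (n+2)) (h : i < j) (b : Fin (n+2) → Bool)
    (hb : b i = b j) (k : Fin (n+2) → ZLat d) : small R b k ↔ small R (bplus i j h b) (km i j h k) := by
  unfold small
  refine forall_congr' fun c => ?_
  have : (∑ u, if b u then k u c else 0) = ∑ u, if bplus i j h b u then km i j h k u c else 0 := by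
    rw [sum2 _ i j h, Fin.sum_univ_succ]
    simp only [bplus, km, Fin.cons_zero, Fin.cons_succ, remove2_apply, ← hb, Pi.add_apply]
    split_ifs <;> ring
  rw [this]

theorem small_minus {d n : ℕ} (R : ℕ) (q : Fin (n+1)) (b : Fin (n+1) → Bool)
    (y : Fin (n+1) → ZLat d) (l : ZLat d) : small R b y ↔ small R (bminus q b) (xl q y l) := by
  unfold small
  refine forall_congr' fun c => ?_
  have : (∑ u, if b u then y u c else 0) = ∑ u, if bminus q b u then xl q y l u c else 0 := by
    rw [Fin.sum_univ_succAbove _ q, Fin.sum_univ_succ, Fin.sum_univ_succ]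
    simp only [bminus, xl, Fin.cons_zero, Fin.cons_succ, Pi.sub_apply]
    split_ifs <;> ring
  rw [this]

theorem mass_plus {d n : ℕ} (hd : 3 ≤ d) (w : Fin d → ℝ) (N : ℕ) (i j : Fin (n+2)) (h : i < j)
    (f : Chaos d (n+1)) (Cg : ENNReal) (hCg : ∑' l : ZLat d, ENNReal.ofReal (GK N l) ≤ Cg) :
    mass (TplusL d w (epsN N) i j h f) ≤ ENNReal.ofReal (CW d w) * Cg * mass f := by
  unfold mass
  calc _ ≤ ∑' k : Fin (n+2) → ZLat d, ENNReal.ofReal (CW d w) * (ENNReal.ofReal (GK N (k i)) * ‖f (km i j h k)‖ₑ^2) :=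
        ENNReal.tsum_le_tsum fun k => plus_bd hd w N i j h f k
    _ ≤ ∑' x, ∑' l, ENNReal.ofReal (CW d w) * (ENNReal.ofReal (GK N l) * ‖f x‖ₑ^2) :=
        plus_sum i j h (fun x l => ENNReal.ofReal (CW d w) * (ENNReal.ofReal (GK N l) * ‖f x‖ₑ^2))
    _ ≤ _ := by
        simp only [ENNReal.tsum_mul_left, ENNReal.tsum_mul_right]
        rw [mul_assoc]
        gcongr

theorem massS_plus {d n : ℕ} (hd : 3 ≤ d) (w : Fin d → ℝ) (N R : ℕ) (i j : Fin (n+2)) (h : i < j)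
    (b : Fin (n+2) → Bool) (hb : b i = b j)
    (f : Chaos d (n+1)) (Cg : ENNReal) (hCg : ∑' l : ZLat d, ENNReal.ofReal (GK N l) ≤ Cg) :
    massS R b (TplusL d w (epsN N) i j h f) ≤ ENNReal.ofReal (CW d w) * Cg * massS R (bplus i j h b) f := by
  unfold massS
  set ψ : (Fin (n+1) → ZLat d) → ENNReal := fun x => if small R (bplus i j h b) x then ‖f x‖ₑ^2 else 0 with hψ
  calc _ ≤ ∑' k : Fin (n+2) → ZLat d, ENNReal.ofReal (CW d w) * (ENNReal.ofReal (GK N (k i)) * ψ (km i j h k)) := by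
        refine ENNReal.tsum_le_tsum fun k => ?_
        rw [hψ]
        simp only [← small_plus R i j h b hb k]
        split_ifs
        · exact plus_bd hd w N i j h f k
        · simp
    _ ≤ ∑' x, ∑' l, ENNReal.ofReal (CW d w) * (ENNReal.ofReal (GK N l) * ψ x) :=
        plus_sum i j h (fun x l => ENNReal.ofReal (CW d w) * (ENNReal.ofReal (GK N l) * ψ x))
    _ ≤ _ := by
        simp only [ENNReal.tsum_mul_left, ENNReal.tsum_mul_right]
        rw [mul_assoc]
        gcongr

theorem small_ball {d n : ℕ} (R : ℕ) (i j : Fin (n+2)) (h : i < j)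
    (b : Fin (n+2) → Bool) (hb : b i ≠ b j) :
    ∃ z : (Fin (n+1) → ZLat d) → ZLat d, ∀ k, small R b k → ∀ c, |k i c - z (km i j h k) c| ≤ (R:ℤ) := by
  cases hi : b i
  · have hj : b j = true := by rw [hi] at hb; simpa using hb.symm
    refine ⟨fun x c => x 0 c + ∑ a, if remove2 b i j h a then x a.succ c else 0, fun k hk c => ?_⟩
    have := hk c
    rw [sum2 _ i j h] at this
    simp only [hi, hj, km, Fin.cons_zero, Fin.cons_succ, remove2_apply, Pi.add_apply] at this ⊢
    rw [← abs_neg]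
    convert this using 2
    simp
    ring
  · have hj : b j = false := by rw [hi] at hb; simpa using hb.symm
    refine ⟨fun x c => - ∑ a, if remove2 b i j h a then x a.succ c else 0, fun k hk c => ?_⟩
    have := hk c
    rw [sum2 _ i j h] at this
    simp only [hi, hj, km, Fin.cons_zero, Fin.cons_succ, remove2_apply, Pi.add_apply] at this ⊢
    convert this using 2
    simp

theorem massS_plus' {d n : ℕ} (hd : 3 ≤ d) (w : Fin d → ℝ) (N R : ℕ) (i j : Fin (n+2)) (h : i < j)
    (b : Fin (n+2) → Bool) (hb : b i ≠ b j) (f : Chaos d (n+1)) :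
    massS R b (TplusL d w (epsN N) i j h f) ≤ ENNReal.ofReal (CW d w) *
      (((2*R+1)^d : ℕ) * ENNReal.ofReal (gN d N)) * mass f := by
  obtain ⟨z, hz⟩ := small_ball (d := d) R i j h b hb
  unfold massS mass
  set Θ : (Fin (n+1) → ZLat d) → ZLat d → ENNReal := fun x l => ENNReal.ofReal (CW d w) *
    ((if l ∈ {l : ZLat d | ∀ c, |l c - z x c| ≤ (R:ℤ)} then ENNReal.ofReal (GK N l) else 0) * ‖f x‖ₑ^2) with hΘ
  calc _ ≤ ∑' k : Fin (n+2) → ZLat d, Θ (km i j h k) (k i) := by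
        refine ENNReal.tsum_le_tsum fun k => ?_
        split_ifs with hs
        · rw [hΘ]
          simp only
          rw [if_pos (show k i ∈ {l : ZLat d | ∀ c, |l c - z (km i j h k) c| ≤ (R:ℤ)} from hz k hs)]
          exact plus_bd hd w N i j h f k
        · simp
    _ ≤ ∑' x, ∑' l, Θ x l := plus_sum i j h Θ
    _ ≤ _ := by
        rw [hΘ]
        simp only [ENNReal.tsum_mul_left, ENNReal.tsum_mul_right]
        rw [mul_assoc]
        gcongr
        rw [← ENNReal.tsum_mul_left]
        refine ENNReal.tsum_le_tsum fun x => ?_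
        gcongr
        refine le_trans (le_of_eq ?_)
          (sum_GK_ball N R {l : ZLat d | ∀ c, |l c - z x c| ≤ (R:ℤ)} (z x) (fun l hl => hl))
        refine tsum_congr fun l => ?_
        congr 1

theorem mass_minus {d n : ℕ} (hd : 3 ≤ d) (w : Fin d → ℝ) (N : ℕ) (q : Fin (n+1))
    (f : Chaos d (n+2)) (Cg : ENNReal) (hCg : ∑' l : ZLat d, ENNReal.ofReal (GK N l) ≤ Cg) :
    mass (TminusL d w (epsN N) q f) ≤ ENNReal.ofReal (CW d w) * Cg * mass f := by
  unfold mass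
  calc _ ≤ ∑' y : Fin (n+1) → ZLat d, ENNReal.ofReal (CW d w) * Cg * ∑' l, ‖f (xl q y l)‖ₑ^2 := by
        refine ENNReal.tsum_le_tsum fun y => (minus_bd hd w N q f y).trans ?_
        gcongr
    _ ≤ _ := by
        rw [ENNReal.tsum_mul_left]
        gcongr
        exact minus_sum q (fun x => ‖f x‖ₑ^2)

theorem massS_minus {d n : ℕ} (hd : 3 ≤ d) (w : Fin d → ℝ) (N R : ℕ) (q : Fin (n+1))
    (b : Fin (n+1) → Bool)
    (f : Chaos d (n+2)) (Cg : ENNReal) (hCg : ∑' l : ZLat d, ENNReal.ofReal (GK N l) ≤ Cg) :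
    massS R b (TminusL d w (epsN N) q f) ≤ ENNReal.ofReal (CW d w) * Cg * massS R (bminus q b) f := by
  unfold massS
  set ψ : (Fin (n+2) → ZLat d) → ENNReal := fun x => if small R (bminus q b) x then ‖f x‖ₑ^2 else 0 with hψ
  calc _ ≤ ∑' y : Fin (n+1) → ZLat d, ENNReal.ofReal (CW d w) * Cg * ∑' l, ψ (xl q y l) := by
        refine ENNReal.tsum_le_tsum fun y => ?_
        rw [hψ]
        simp only [← small_minus R q b y]
        split_ifs
        · refine (minus_bd hd w N q f y).trans ?_
          gcongr
        · simp
    _ ≤ _ := by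
        rw [ENNReal.tsum_mul_left]
        gcongr
        exact minus_sum q ψ

def Inv (κ : ℕ) {d n : ℕ} (f : ℕ → Chaos d n) : Prop :=
  (∃ C : ENNReal, C ≠ ⊤ ∧ ∀ N, mass (f N) ≤ C) ∧
  ∃ col : Fin n → Fin κ, ∀ b : Fin n → Bool, (∃ u v, col u = col v ∧ b u ≠ b v) →
    ∀ R : ℕ, Filter.Tendsto (fun N => massS R b (f N)) Filter.atTop (nhds 0)

theorem tendsto_aux {C : ENNReal} (hC : C ≠ ⊤) {g h : ℕ → ENNReal}
    (hg : Filter.Tendsto g Filter.atTop (nhds 0)) (hle : ∀ N, h N ≤ C * g N) :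
    Filter.Tendsto h Filter.atTop (nhds 0) := by
  have := ENNReal.Tendsto.const_mul hg (Or.inr hC)
  rw [mul_zero] at this
  exact tendsto_of_tendsto_of_tendsto_of_le_of_le tendsto_const_nhds this (fun _ => zero_le) hle

theorem Inv_plus (κ : ℕ) {d n : ℕ} (hd : 3 ≤ d) (w : Fin d → ℝ) (i j : Fin (n+2)) (h : i < j)
    (f : ℕ → Chaos d (n+1)) (hf : Inv κ f) : Inv κ (fun N => TplusL d w (epsN N) i j h (f N)) := by
  obtain ⟨⟨C, hC, hm⟩, col, hcol⟩ := hf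
  obtain ⟨Cg, hCg, hg⟩ := sum_GK hd
  have hK : ENNReal.ofReal (CW d w) * Cg ≠ ⊤ := ENNReal.mul_ne_top ENNReal.ofReal_ne_top hCg
  refine ⟨⟨ENNReal.ofReal (CW d w) * Cg * C, ENNReal.mul_ne_top hK hC, fun N => ?_⟩, ?_⟩
  · refine (mass_plus hd w N i j h (f N) Cg (hg N)).trans ?_
    gcongr
    exact hm N
  set φ : Fin (n+2) → Fin (n+1) := j.insertNth 0 ((pred i j h).insertNth 0 Fin.succ) with hφ
  refine ⟨fun u => col (φ u), ?_⟩
  rintro b ⟨u, v, huv, hbuv⟩ R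
  by_cases hb : b i = b j
  · have hlift : ∀ u, bplus i j h b (φ u) = b u := by
      intro u
      rcases cases2 i j h u with hu | rfl | ⟨a, rfl⟩
      · have h0 : φ u = 0 := by
          rw [hu, hφ]
          conv_lhs => arg 4; rw [← succAbove_pred i j h]
          simp
        rw [h0, hu]
        rfl
      · simp [hφ, bplus, hb]
      · simp [hφ, bplus, remove2_apply]
    refine tendsto_aux hK (hcol (bplus i j h b) ⟨φ u, φ v, huv, ?_⟩ R) (fun N => massS_plus hd w N R i j h b hb (f N) Cg (hg N))
    rwa [hlift, hlift]
  · have hgt : Filter.Tendsto (fun N => ENNReal.ofReal (gN d N)) Filter.atTop (nhds 0) := by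
      simpa using ENNReal.tendsto_ofReal (gN_tendsto d hd)
    refine tendsto_aux (C := ENNReal.ofReal (CW d w) * ((2*R+1)^d : ℕ) * C) ?_ hgt (fun N => ?_)
    · exact ENNReal.mul_ne_top (ENNReal.mul_ne_top ENNReal.ofReal_ne_top (ENNReal.natCast_ne_top _)) hC
    · refine (massS_plus' hd w N R i j h b hb (f N)).trans ?_
      calc _ ≤ ENNReal.ofReal (CW d w) * (((2*R+1)^d : ℕ) * ENNReal.ofReal (gN d N)) * C := by
            gcongr
            exact hm N
        _ = _ := by ring

theorem Inv_minus (κ : ℕ) {d n : ℕ} (hd : 3 ≤ d) (w : Fin d → ℝ) (q : Fin (n+1))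
    (f : ℕ → Chaos d (n+2)) (hf : Inv κ f) : Inv κ (fun N => TminusL d w (epsN N) q (f N)) := by
  obtain ⟨⟨C, hC, hm⟩, col, hcol⟩ := hf
  obtain ⟨Cg, hCg, hg⟩ := sum_GK hd
  have hK : ENNReal.ofReal (CW d w) * Cg ≠ ⊤ := ENNReal.mul_ne_top ENNReal.ofReal_ne_top hCg
  refine ⟨⟨ENNReal.ofReal (CW d w) * Cg * C, ENNReal.mul_ne_top hK hC, fun N => ?_⟩, ?_⟩
  · refine (mass_minus hd w N q (f N) Cg (hg N)).trans ?_
    gcongr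
    exact hm N
  set φ : Fin (n+1) → Fin (n+2) := q.insertNth 0 (fun a => a.succ.succ) with hφ
  refine ⟨fun u => if col (φ u) = col 1 then col 0 else col (φ u), ?_⟩
  rintro b ⟨u, v, huv, hbuv⟩ R
  have hlift : ∀ u, bminus q b (φ u) = b u := by
    intro u
    rcases Fin.eq_self_or_eq_succAbove q u with rfl | ⟨a, rfl⟩
    · simp [hφ, bminus]
    · simp [hφ, bminus]
  have h01 : bminus q b 0 = bminus q b 1 := rfl
  refine tendsto_aux hK (hcol (bminus q b) ?_ R) (fun N => massS_minus hd w N R q b (f N) Cg (hg N))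
  rw [← hlift u, ← hlift v] at hbuv
  generalize bminus q b = B at *
  by_cases hu : col (φ u) = col 1 <;> by_cases hv : col (φ v) = col 1
  · exact ⟨_, _, hu.trans hv.symm, hbuv⟩
  · simp only [hu, hv, if_true, if_false] at huv
    by_cases h1 : B (φ u) = B 1
    · exact ⟨0, φ v, huv, by rw [h01, ← h1]; exact hbuv⟩
    · exact ⟨φ u, 1, hu, h1⟩
  · simp only [hu, hv, if_true, if_false] at huv
    by_cases h1 : B (φ v) = B 1
    · exact ⟨φ u, 0, huv, by rw [h01, ← h1]; exact hbuv⟩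
    · exact ⟨φ v, 1, hv, h1⟩
  · simp only [hu, hv, if_false] at huv
    exact ⟨_, _, huv, hbuv⟩

theorem Inv_path (κ : ℕ) {d : ℕ} (hd : 3 ≤ d) (w : Fin d → ℝ) {a b : ℕ} (p : PPath a b) :
    ∀ (f : ℕ → Chaos d a), Inv κ f → Inv κ (fun N => PPath.app d w (epsN N) p (f N)) := by
  induction p with
  | nil n => intro f hf; exact hf
  | cons mv p ih =>
    intro f hf
    refine ih (fun N => PMove.app d w (epsN N) mv (f N)) ?_
    cases mv with
    | plus n i j h => exact Inv_plus κ hd w i j h f hf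
    | minus n q => exact Inv_minus κ hd w q f hf

theorem Inv_base (d κ : ℕ) (j : Fin κ → ZLat d) : Inv κ (fun _ : ℕ => Ebase d κ j) := by
  refine ⟨⟨mass (Ebase d κ j), ?_, fun _ => le_rfl⟩, id, ?_⟩
  · unfold mass
    rw [tsum_eq_sum (s := Finset.univ.image (fun σ : Equiv.Perm (Fin κ) => j ∘ σ))]
    · exact (ENNReal.sum_lt_top.mpr fun k _ => by finiteness).ne
    · intro k hk
      have : Ebase d κ j k = 0 := by
        unfold Ebase
        rw [Finset.sum_eq_zero, mul_zero]
        intro σ _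
        rw [if_neg]
        rintro rfl
        exact hk (Finset.mem_image_of_mem _ (Finset.mem_univ σ))
      simp [this]
  · rintro b ⟨u, v, huv, hb⟩
    exact absurd (congrArg b huv) hb

theorem final_bd {d n : ℕ} (f : Chaos d n) (i : Fin n) (R : ℕ) (hR : 0 < R) :
    ∑' k, ENNReal.ofReal ((wSq k / 2)^(-(1:ℝ)) * ‖f k‖^2) ≤
      2 * massS R (fun u => decide (u = i)) f + ENNReal.ofReal (2 / (R:ℝ)^2) * mass f := by
  unfold massS mass
  rw [← ENNReal.tsum_mul_left, ← ENNReal.tsum_mul_left, ← ENNReal.tsum_add]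
  refine ENNReal.tsum_le_tsum fun k => ?_
  have hw := wSq_nonneg k
  rw [Real.rpow_neg_one, ENNReal.ofReal_mul (by positivity), ← enorm_sq_eq]
  have hRR : (0:ℝ) < R := by exact_mod_cast hR
  split_ifs with h
  · refine le_trans ?_ le_self_add
    gcongr
    rw [show (2:ENNReal) = ENNReal.ofReal 2 by simp]
    apply ENNReal.ofReal_le_ofReal
    by_cases hk : ∀ a, k a = 0
    · have : wSq k = 0 := by unfold wSq nsq; simp [hk]
      simp [this]
    · push Not at hk
      obtain ⟨a, ha⟩ := hk
      have := (one_le_nsq ha).trans (nsq_le_wSq k a)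
      rw [inv_div, div_le_iff₀ (by linarith)]
      linarith
  · refine le_trans ?_ le_add_self
    gcongr
    rw [inv_div]
    unfold small at h
    push Not at h
    obtain ⟨c, hc⟩ := h
    simp at hc
    have h1 : (R:ℝ) ≤ |(k i c : ℝ)| := by exact_mod_cast hc.le
    have h2 : (R:ℝ)^2 ≤ (k i c : ℝ)^2 := by rw [← sq_abs (k i c : ℝ)]; gcongr
    have := (h2.trans (sq_le_nsq (k i) c)).trans (nsq_le_wSq k i)
    gcongr

/-- vanishing of off-the-ground-chaos compositions, `d ≥ 3`.
For any fixed path of creation/annihilation moves starting at chaos level `κ ∈ {1,2}`,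
staying at heights `p_s ≥ 1` (i.e. levels `≥ κ`) and ending at a level `M ≥ κ + 1`
(i.e. final height `m ≥ 2`), the `(−L₀)^{−1/2}`-norm of the composition applied to the
elementary kernel vanishes along the sequence `ε_N = (N + 1/2)⁻¹ → 0`. -/
theorem stmt14 (d : ℕ) (hd : 3 ≤ d) (w : Fin d → ℝ) (hw : w ≠ 0)
    (κ : ℕ) (hκ : κ = 1 ∨ κ = 2) (M : ℕ) (hM : κ + 1 ≤ M)
    (p : PPath κ M) (hlev : p.levelsGE κ) (hlen : 1 ≤ p.length)
    (j : Fin κ → ZLat d) (hj : ∀ t, j t ≠ 0) :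
    Filter.Tendsto
      (fun N : ℕ => Real.sqrt (∑' k : Fin M → ZLat d,
        (wSq k / 2) ^ (-(1:ℝ)) *
          ‖PPath.app d w (((N:ℝ) + 1/2)⁻¹) p (Ebase d κ j) k‖^2))
      Filter.atTop (nhds 0) := by
  have hinv := Inv_path κ hd w p _ (Inv_base d κ j)
  set F : ℕ → Chaos d M := fun N => PPath.app d w (epsN N) p (Ebase d κ j) with hF
  obtain ⟨⟨C, hC, hm⟩, col, hcol⟩ := hinv
  obtain ⟨u, v, huv, hc⟩ := Fintype.exists_ne_map_eq_of_card_lt col (by simp; omega)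
  have hS := hcol (fun x => decide (x = u)) ⟨u, v, hc, by simp [huv.symm]⟩
  have hE : Filter.Tendsto (fun N => ∑' k, ENNReal.ofReal ((wSq k / 2)^(-(1:ℝ)) * ‖F N k‖^2))
      Filter.atTop (nhds 0) := by
    rw [ENNReal.tendsto_nhds_zero]
    intro δ hδ
    have hδ2 : 0 < δ / 2 := ENNReal.half_pos hδ.ne'
    have hR : Filter.Tendsto (fun R : ℕ => ENNReal.ofReal (2 / (R:ℝ)^2)) Filter.atTop (nhds 0) := by
      have : Filter.Tendsto (fun R : ℕ => 2 / (R:ℝ)^2) Filter.atTop (nhds 0) := by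
        apply Filter.Tendsto.div_atTop tendsto_const_nhds
        exact (Filter.tendsto_pow_atTop (by norm_num)).comp tendsto_natCast_atTop_atTop
      simpa using ENNReal.tendsto_ofReal this
    have hR2 := tendsto_aux hC hR (h := fun R : ℕ => ENNReal.ofReal (2 / (R:ℝ)^2) * C)
      (fun N => (mul_comm _ _).le)
    obtain ⟨R, hR3, hR0⟩ := ((ENNReal.tendsto_nhds_zero.mp hR2 _ hδ2).and
      (Filter.eventually_gt_atTop 0)).exists
    have hS2 := tendsto_aux (C := 2) (by simp) (hS R) (fun N => le_rfl)
    filter_upwards [ENNReal.tendsto_nhds_zero.mp hS2 _ hδ2] with N hN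
    refine (final_bd (F N) u R hR0).trans ?_
    rw [← ENNReal.add_halves δ]
    refine add_le_add hN (le_trans ?_ hR3)
    gcongr
    exact hm N
  have hE2 := (ENNReal.tendsto_toReal ENNReal.zero_ne_top).comp hE
  have hE3 := (Real.continuous_sqrt.tendsto _).comp hE2
  simp only [ENNReal.toReal_zero, Real.sqrt_zero] at hE3
  refine hE3.congr fun N => ?_
  simp only [Function.comp]
  rw [ENNReal.tsum_toReal_eq (fun _ => ENNReal.ofReal_ne_top)]
  congr 1
  refine tsum_congr fun k => ?_
  rw [ENNReal.toReal_ofReal]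
  · rfl
  · have := wSq_nonneg k
    positivity

end SBE
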